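/- arXiv:2605.28012 — 2 statements merged into one kernel-verified Lean document; each statement's English description precedes it below -/
import Mathlib

section
/- Let r, s > 1 and let m_1, ..., m_r and n_1, ..., n_s be positive integers, with the cyclic conventions m_{r+1} = m_1 and n_{s+1} = n_1. Then for all integers a, b with 0 ≤ a ≤ s and 1 ≤ b ≤ r, the alternating sum F_{r,s}^{(b)}(m; n; a; q) is a polynomial in q with nonnegative integer coefficients. -/
open Finset

noncomputable section

/-- The `q`-integer `[n] = (1 - x^n)/(1 - x)` at the value `x`. -/
def qint (x : RatFunc ℚ) (n : ℕ) : RatFunc ℚ := (1 - x ^ n) / (1 - x)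

/-- The `q`-factorial `[n]! = [1][2]⋯[n]`, with `[0]! = 1`. -/
def qfact (x : RatFunc ℚ) (n : ℕ) : RatFunc ℚ := ∏ i ∈ Finset.range n, qint x (i + 1)

/-- The Gaussian (q-binomial) coefficient `[N choose K]`, equal to
`[N]!/([K]![N-K]!)` if `0 ≤ K ≤ N`, and `0` otherwise. -/
def qbinom (x : RatFunc ℚ) (N K : ℤ) : RatFunc ℚ :=
  if 0 ≤ K ∧ K ≤ N then qfact x N.toNat / (qfact x K.toNat * qfact x (N - K).toNat) else 0

/-- The alternating sum `F_{r,s}^{(b)}(m; n; a; x)`.  The cyclic vectors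
`(m_1, …, m_r)` and `(n_1, …, n_s)` are given as functions `m n : ℕ → ℕ` on
`0, …, r-1` and `0, …, s-1` respectively, with cyclic successor `(i+1) % r`
(so `m_{r+1} = m_1` and `n_{s+1} = n_1`). -/
def F (r s a b : ℕ) (m n : ℕ → ℕ) (x : RatFunc ℚ) : RatFunc ℚ :=
  (qfact x (m 0) * qfact x (n 0) * qfact x (m (r - 1) + n (s - 1) + 1)) /
      (qfact x (m 0 + m (r - 1) + 1) * qfact x (n 0 + n (s - 1))) *
    ∑ k ∈ Finset.Icc (-(n 0 : ℤ)) ((n 0 : ℤ)),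
      (-1 : RatFunc ℚ) ^ k *
        x ^ ((a : ℤ) * k ^ 2 + (2 * (b : ℤ) - 1) * (k * (k - 1) / 2)) *
        (∏ i ∈ Finset.range r,
          qbinom x ((m i : ℤ) + (m ((i + 1) % r) : ℤ) + 1) ((m i : ℤ) + k)) *
        (∏ j ∈ Finset.range s,
          qbinom x ((n j : ℤ) + (n ((j + 1) % s) : ℤ)) ((n j : ℤ) + k))

/-- A rational function lies in `ℕ[q]` if it equals a polynomial in `q`
with nonnegative integer coefficients. -/
def IsNonnegPoly (f : RatFunc ℚ) : Prop :=
  ∃ p : Polynomial ℕ, f = algebraMap (Polynomial ℚ) (RatFunc ℚ) (p.map (Nat.castRingHom ℚ))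

/-! Write the summand of `F` in terms of the central coefficients `1/([h+k]![h+ε-k]!)`, with
`ε = 1` for the `m`-cycle and `ε = 0` for the `n`-cycle. By the `q`-Vandermonde identity the
product of two of them, times a suitable `q`-factorial, is a combination of single ones whose
coefficients are powers of `q` times reciprocals of `q`-factorials. The identity has two forms, one
of which also absorbs a factor `q^(k²-εk)`. Merging neighbours one at a time therefore
collapses each cycle to an `ℕ[q]`-combination of single coefficients. The `r-1` mergers in the
`m`-cycle absorb `q^((b-1)(k²-k))`, while the `s-1` mergers in the `n`-cycle and the final one that
joins the two cycles absorb `q^(ak²)`, whence the bounds `b ≤ r` and `a ≤ s`. Before that final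
merger the reflection `k ↦ -k` turns the remaining coefficient with `ε = 1` into one with `ε = 0`.
The alternating sum of a single coefficient is then `1` for `h = 0`, and vanishes for `h > 0` by the
reflection `k ↦ 1 - k`. -/

/-- The semiring `ℕ[q]` inside the field of rational functions. -/
def nonnegPoly : Subsemiring (RatFunc ℚ) :=
  ((algebraMap (Polynomial ℚ) (RatFunc ℚ)).comp
    (Polynomial.mapRingHom (Nat.castRingHom ℚ))).rangeS

lemma isNonnegPoly_iff_mem {f : RatFunc ℚ} : IsNonnegPoly f ↔ f ∈ nonnegPoly := by
  simp only [IsNonnegPoly, nonnegPoly, RingHom.mem_rangeS, RingHom.comp_apply,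
    Polynomial.coe_mapRingHom, eq_comm]

local notation "q" => (RatFunc.X : RatFunc ℚ)

lemma X_zpow_mem_nonnegPoly {z : ℤ} (hz : 0 ≤ z) : q ^ z ∈ nonnegPoly := by
  lift z to ℕ using hz
  rw [zpow_natCast]
  exact pow_mem (show q ∈ nonnegPoly from ⟨Polynomial.X, by simp⟩) z

lemma X_pow_ne_one {n : ℕ} (hn : n ≠ 0) : q ^ n ≠ 1 := by
  intro h
  rw [← RatFunc.algebraMap_X, ← map_pow, ← map_one (algebraMap (Polynomial ℚ) (RatFunc ℚ))] at h
  have hdeg := congrArg Polynomial.natDegree (RatFunc.algebraMap_injective ℚ h)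
  simp [hn] at hdeg

lemma one_sub_X_ne_zero : 1 - q ≠ 0 :=
  sub_ne_zero.2 fun h => X_pow_ne_one one_ne_zero ((pow_one q).trans h.symm)

/-- The `q`-integer `[z] = (1 - q^z)/(1 - q)` for `z : ℤ`. -/
def qintZ (z : ℤ) : RatFunc ℚ := (1 - q ^ z) / (1 - q)

lemma qintZ_natCast (n : ℕ) : qintZ n = qint q n := by
  simp only [qintZ, qint, zpow_natCast]

lemma qintZ_zero : qintZ 0 = 0 := by simp [qintZ]

lemma qintZ_add (y z : ℤ) : qintZ (y + z) = qintZ y + q ^ y * qintZ z := by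
  rw [qintZ, qintZ, qintZ, zpow_add₀ RatFunc.X_ne_zero]
  ring

lemma X_zpow_mul_qintZ_neg (z : ℤ) : q ^ z * qintZ (-z) = -qintZ z := by
  rw [eq_neg_iff_add_eq_zero, add_comm, ← qintZ_add, add_neg_cancel, qintZ_zero]

lemma qint_ne_zero {n : ℕ} (hn : n ≠ 0) : qint q n ≠ 0 :=
  div_ne_zero (sub_ne_zero.2 (X_pow_ne_one hn).symm) one_sub_X_ne_zero

lemma qfact_ne_zero (n : ℕ) : qfact q n ≠ 0 :=
  prod_ne_zero_iff.2 fun i _ => qint_ne_zero i.succ_ne_zero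

lemma qfact_zero (x : RatFunc ℚ) : qfact x 0 = 1 := prod_range_zero _

lemma qfact_succ (x : RatFunc ℚ) (n : ℕ) : qfact x (n + 1) = qfact x n * qint x (n + 1) :=
  prod_range_succ _ _

/-- The reciprocal `1/[z]!` of the `q`-factorial, extended by `0` to negative integers. This makes
the recurrence `[z]/[z]! = 1/[z-1]!` valid for every integer `z`. -/
def qfactInv (z : ℤ) : RatFunc ℚ := if 0 ≤ z then (qfact q z.toNat)⁻¹ else 0

lemma qfactInv_of_neg {z : ℤ} (hz : z < 0) : qfactInv z = 0 := if_neg (not_le.2 hz)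

lemma qfactInv_natCast (n : ℕ) : qfactInv n = (qfact q n)⁻¹ := by
  rw [qfactInv, if_pos n.cast_nonneg, Int.toNat_natCast]

lemma qfact_mul_qfactInv (n : ℕ) : qfact q n * qfactInv n = 1 := by
  rw [qfactInv_natCast, mul_inv_cancel₀ (qfact_ne_zero n)]

lemma qfactInv_zero : qfactInv 0 = 1 := by
  simpa only [qfact_zero, one_mul, Nat.cast_zero] using qfact_mul_qfactInv 0

lemma qintZ_mul_qfactInv (z : ℤ) : qintZ z * qfactInv z = qfactInv (z - 1) := by
  rcases lt_trichotomy z 0 with hz | rfl | hz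
  · rw [qfactInv_of_neg hz, qfactInv_of_neg (by lia), mul_zero]
  · rw [qintZ_zero, zero_mul, qfactInv_of_neg (by lia)]
  · obtain ⟨n, rfl⟩ : ∃ n : ℕ, z = (n + 1 : ℕ) := ⟨(z - 1).toNat, by lia⟩
    rw [show ((n + 1 : ℕ) : ℤ) - 1 = n by lia, qfactInv_natCast, qfactInv_natCast,
      qintZ_natCast, qfact_succ, mul_comm (qfact q n), mul_inv, ← mul_assoc,
      mul_inv_cancel₀ (qint_ne_zero n.succ_ne_zero), one_mul]

lemma qbinom_eq (N : ℕ) (K : ℤ) :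
    qbinom q N K = qfact q N * qfactInv K * qfactInv (N - K) := by
  unfold qbinom
  split_ifs with h
  · rw [qfactInv, qfactInv, if_pos h.1, if_pos (sub_nonneg.2 h.2), Int.toNat_natCast,
      div_eq_mul_inv, mul_inv, mul_assoc]
  · rcases not_and_or.1 h with hK | hK
    · rw [qfactInv_of_neg (not_le.1 hK), mul_zero, zero_mul]
    · rw [qfactInv_of_neg (z := N - K) (by lia), mul_zero]

lemma qfactInv_mul_qbinom (N : ℕ) (K : ℤ) :
    qfactInv N * qbinom q N K = qfactInv K * qfactInv (N - K) := by
  rw [qbinom_eq]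
  linear_combination qfactInv K * qfactInv (N - K) * qfact_mul_qfactInv N

lemma qbinom_mul_qfact (N K : ℕ) :
    qbinom q N K * qfact q K = qfact q N * qfactInv (N - K) := by
  rw [qbinom_eq]
  linear_combination qfact q N * qfactInv (N - K) * qfact_mul_qfactInv K

lemma qbinom_eq_zero_of_neg (N : ℤ) {K : ℤ} (hK : K < 0) : qbinom q N K = 0 :=
  if_neg fun h => absurd h.1 (not_le.2 hK)

lemma qbinom_eq_zero_of_lt {N K : ℤ} (hK : N < K) : qbinom q N K = 0 :=
  if_neg fun h => absurd h.2 (not_le.2 hK)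

lemma qbinom_zero_zero : qbinom q 0 0 = 1 := by
  simp [qbinom, qfact_zero]

lemma qbinom_symm (N : ℕ) (K : ℤ) : qbinom q N (N - K) = qbinom q N K := by
  rw [qbinom_eq, qbinom_eq, sub_sub_cancel, mul_right_comm]

lemma qbinom_succ (N : ℕ) (K : ℤ) :
    qbinom q (N + 1 : ℕ) K = qbinom q N (K - 1) + q ^ K * qbinom q N K := by
  have hsplit : qint q (N + 1) = qintZ K + q ^ K * qintZ (N + 1 - K) := by
    rw [← qintZ_add, add_sub_cancel, ← qintZ_natCast, Nat.cast_succ]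
  rw [qbinom_eq, qbinom_eq, qbinom_eq, qfact_succ, hsplit, Nat.cast_succ, ← qintZ_mul_qfactInv K,
    show (N : ℤ) - (K - 1) = N + 1 - K by ring, show (N : ℤ) - K = N + 1 - K - 1 by ring,
    ← qintZ_mul_qfactInv (N + 1 - K)]
  ring

lemma qbinom_mem_nonnegPoly (N : ℕ) (K : ℤ) : qbinom q N K ∈ nonnegPoly := by
  induction N generalizing K with
  | zero =>
    rcases eq_or_ne K 0 with rfl | hK
    · rw [Nat.cast_zero, qbinom_zero_zero]
      exact one_mem _
    · rw [qbinom, if_neg (by lia)]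
      exact zero_mem _
  | succ N ih =>
    rcases lt_or_ge K 0 with hK | hK
    · rw [qbinom_eq_zero_of_neg _ hK]
      exact zero_mem _
    · rw [qbinom_succ]
      exact add_mem (ih _) (mul_mem (X_zpow_mem_nonnegPoly hK) (ih K))

lemma qVandermonde (B C : ℕ) (A : ℤ) :
    ∑ j ∈ range (B + 1), q ^ ((B - j) * (A - j)) * (qbinom q B j * qbinom q C (A - j))
      = qbinom q (B + C : ℕ) A := by
  induction B generalizing A with
  | zero => simp [qbinom_zero_zero]
  | succ B ih =>
    have hpascal (j : ℕ) : q ^ (((B + 1 : ℕ) - j) * (A - j))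
          * (qbinom q (B + 1 : ℕ) j * qbinom q C (A - j))
        = q ^ (((B + 1 : ℕ) - j) * (A - j)) * (qbinom q B (j - 1) * qbinom q C (A - j))
          + q ^ A * (q ^ ((B - j) * (A - j)) * (qbinom q B j * qbinom q C (A - j))) := by
      have hexp : q ^ (((B + 1 : ℕ) - j) * (A - j)) * q ^ (j : ℤ)
          = q ^ A * q ^ ((B - j) * (A - j)) := by
        rw [← zpow_add₀ RatFunc.X_ne_zero, ← zpow_add₀ RatFunc.X_ne_zero]
        congr 1
        push_cast
        ring
      rw [qbinom_succ]
      linear_combination qbinom q B j * qbinom q C (A - j) * hexp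
    have hshift : ∑ j ∈ range (B + 1 + 1), q ^ (((B + 1 : ℕ) - j) * (A - j))
          * (qbinom q B (j - 1) * qbinom q C (A - j)) = qbinom q (B + C : ℕ) (A - 1) := by
      rw [sum_range_succ', Nat.cast_zero, qbinom_eq_zero_of_neg _ (by lia), zero_mul, mul_zero,
        add_zero, ← ih]
      refine sum_congr rfl fun j _ => ?_
      rw [Nat.cast_succ, Nat.cast_succ, add_sub_cancel_right, add_sub_add_right_eq_sub,
        show A - ((j : ℤ) + 1) = A - 1 - j by ring]
    have hstay : ∑ j ∈ range (B + 1 + 1), q ^ ((B - j) * (A - j))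
          * (qbinom q B j * qbinom q C (A - j)) = qbinom q (B + C : ℕ) A := by
      rw [sum_range_succ, ih, qbinom_eq_zero_of_lt (N := B) (by lia), zero_mul, mul_zero, add_zero]
    rw [sum_congr rfl fun j _ => hpascal j, sum_add_distrib, ← mul_sum, hshift, hstay,
      add_right_comm, qbinom_succ]

lemma qVandermonde_reflect (B C : ℕ) (A : ℤ) :
    ∑ j ∈ range (B + 1), q ^ (j * (C - A + j)) * (qbinom q B j * qbinom q C (A - j))
      = qbinom q (B + C : ℕ) A := by
  rw [← qbinom_symm, ← qVandermonde, ← sum_flip]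
  refine sum_congr rfl fun j hj => ?_
  have hjB : ((B - j : ℕ) : ℤ) = B - j := by
    rw [mem_range] at hj
    lia
  rw [hjB, qbinom_symm, Nat.cast_add, ← qbinom_symm C (A - _),
    show (B : ℤ) + C - A - j = C - A + (B - j) by ring,
    show (C : ℤ) - (A - (B - j)) = C - A + (B - j) by ring]

lemma sum_range_qbinom_mul_qbinom {c : ℕ} (hc : c ≤ 1) (B C : ℕ) {A : ℤ} {n : ℕ}
    (hn : B ≤ n ∨ A ≤ n) :
    ∑ j ∈ range (n + 1), q ^ (c * ((B - j) * (A - j)) + (1 - c) * (j * (C - A + j)))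
        * (qbinom q B j * qbinom q C (A - j))
      = qbinom q (B + C : ℕ) A := by
  trans ∑ j ∈ range (B + 1), q ^ (c * ((B - j) * (A - j)) + (1 - c) * (j * (C - A + j)))
    * (qbinom q B j * qbinom q C (A - j))
  · refine sum_congr_of_eq_on_inter (fun j _ hj => ?_) (fun j hj hjn => ?_) fun _ _ _ => rfl
    · rw [mem_range] at hj
      rw [qbinom_eq_zero_of_lt (N := B) (by lia), zero_mul, mul_zero]
    · rw [mem_range] at hj hjn
      rw [qbinom_eq_zero_of_neg C (by lia), mul_zero, mul_zero]
  · obtain rfl | rfl : c = 0 ∨ c = 1 := by lia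
    · simpa only [Nat.cast_zero, zero_mul, zero_add, sub_zero, one_mul]
        using qVandermonde_reflect B C A
    · simpa only [Nat.cast_one, one_mul, sub_self, zero_mul, add_zero] using qVandermonde B C A

/-- The normalized central Gaussian coefficient
`1/([h+k]![h+ε-k]!) = [2h+ε choose h+k]/[2h+ε]!`, for `ε ∈ {0, 1}`. -/
def centralCoeff (ε h : ℕ) (k : ℤ) : RatFunc ℚ := qfactInv (h + k) * qfactInv (h + ε - k)

lemma centralCoeff_eq_zero {ε h : ℕ} {k : ℤ} (hk : (h : ℤ) + k < 0 ∨ (h : ℤ) + ε - k < 0) :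
    centralCoeff ε h k = 0 := by
  rcases hk with hk | hk
  · rw [centralCoeff, qfactInv_of_neg hk, zero_mul]
  · rw [centralCoeff, qfactInv_of_neg hk, mul_zero]

lemma centralCoeff_sub (ε h : ℕ) (k : ℤ) : centralCoeff ε h (ε - k) = centralCoeff ε h k := by
  rw [centralCoeff, centralCoeff, mul_comm, ← add_sub_assoc, add_sub_assoc, sub_sub_cancel]

lemma centralCoeff_zero_neg (h : ℕ) (k : ℤ) : centralCoeff 0 h (-k) = centralCoeff 0 h k := by
  simpa only [Nat.cast_zero, zero_sub] using centralCoeff_sub 0 h k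

lemma centralCoeff_one_eq (h : ℕ) (k : ℤ) :
    centralCoeff 1 h k = qintZ (h + 1 + k) * centralCoeff 0 (h + 1) k := by
  rw [centralCoeff, centralCoeff, ← mul_assoc, Nat.cast_add h, Nat.cast_one, qintZ_mul_qfactInv,
    Nat.cast_zero, add_zero, show (h : ℤ) + 1 + k - 1 = h + k by ring]

lemma qfact_mul_centralCoeff_mul_centralCoeff {ε h g B C : ℕ} {k : ℤ}
    (hB : (h : ℤ) + ε - k = B) (hC : (g : ℤ) + k = C) :
    qfact q (h + g + ε) * (centralCoeff ε h k * centralCoeff ε g k)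
      = qfactInv B * qfactInv C * qbinom q (B + C : ℕ) (h + k) := by
  rw [qbinom_eq, show h + g + ε = B + C by lia, centralCoeff, centralCoeff, hB, hC,
    show (g : ℤ) + ε - k = (B + C : ℕ) - (h + k) by lia]
  ring

/-- The exponent of `q` in the coefficients of `centralCoeff_mul_centralCoeff`. -/
def linearizationExp (c ε h g t : ℕ) : ℤ := c * (t * (t + ε)) + (1 - c) * ((h - t) * (g - t))

lemma linearizationExp_nonneg {c ε h g t : ℕ} (hc : c ≤ 1) (hth : t ≤ h) (htg : t ≤ g) :
    0 ≤ linearizationExp c ε h g t := by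
  have hc' : (0 : ℤ) ≤ 1 - c := by lia
  have hprod : (0 : ℤ) ≤ (h - t) * (g - t) := mul_nonneg (by lia) (by lia)
  unfold linearizationExp
  positivity

lemma centralCoeff_mul_centralCoeff {c ε : ℕ} (hc : c ≤ 1) (hε : ε ≤ 1) (h g : ℕ) (k : ℤ) :
    q ^ (c * (k ^ 2 - ε * k))
        * (qfact q (h + g + ε) * (centralCoeff ε h k * centralCoeff ε g k))
      = ∑ t ∈ range (h + 1), q ^ linearizationExp c ε h g t
          * (qfactInv (h - t) * qfactInv (g - t) * centralCoeff ε t k) := by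
  by_cases hk : 0 ≤ (h : ℤ) + ε - k ∧ 0 ≤ (g : ℤ) + k
  · obtain ⟨B, hB⟩ := Int.eq_ofNat_of_zero_le hk.1
    obtain ⟨C, hC⟩ := Int.eq_ofNat_of_zero_le hk.2
    rw [qfact_mul_centralCoeff_mul_centralCoeff hB hC,
      ← sum_range_qbinom_mul_qbinom hc B C (n := h) (by lia), ← sum_flip, mul_sum, mul_sum]
    refine sum_congr rfl fun t ht => ?_
    have hth : ((h - t : ℕ) : ℤ) = h - t := by
      rw [mem_range] at ht
      lia
    have hexp : linearizationExp c ε h g t = c * (k ^ 2 - ε * k)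
        + (c * ((t + ε - k) * (t + k)) + (1 - c) * ((h - t) * (g - t))) := by
      rw [linearizationExp]
      ring
    have hqB := qfactInv_mul_qbinom B (h - t)
    have hqC := qfactInv_mul_qbinom C (t + k)
    rw [show (B : ℤ) - (h - t) = t + ε - k by lia] at hqB
    rw [show (C : ℤ) - (t + k) = g - t by lia] at hqC
    rw [hth, show (h : ℤ) + k - (h - t) = t + k by ring,
      show (B : ℤ) - (h - t) = t + ε - k by lia,
      show (C : ℤ) - (h + k) + (h - t) = g - t by lia, hexp,
      zpow_add₀ RatFunc.X_ne_zero (c * (k ^ 2 - ε * k)), centralCoeff]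
    linear_combination q ^ (c * (k ^ 2 - ε * k))
      * q ^ (c * ((t + ε - k) * (t + k)) + (1 - c) * ((h - t) * (g - t)))
      * (qfactInv C * qbinom q C (t + k) * hqB + qfactInv (h - t) * qfactInv (t + ε - k) * hqC)
  · have hleft : centralCoeff ε h k * centralCoeff ε g k = 0 := by
      rcases not_and_or.1 hk with hk | hk
      · rw [centralCoeff_eq_zero (Or.inr (not_le.1 hk)), zero_mul]
      · rw [centralCoeff_eq_zero (h := g) (Or.inl (not_le.1 hk)), mul_zero]
    rw [hleft, mul_zero, mul_zero, sum_eq_zero]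
    intro t ht
    rw [mem_range] at ht
    rcases lt_or_ge g t with htg | htg
    · rw [qfactInv_of_neg (z := (g : ℤ) - t) (by lia), mul_zero, zero_mul, mul_zero]
    · rw [centralCoeff_eq_zero (by lia), mul_zero, mul_zero]

/-- The function `k ↦ [t]![t+y]!/([t+k]![t+ε-k]!)`. The factor `[t+y]!` is the open end to which
the next link `[t+g+ε]!` of a chain of central coefficients attaches, with `y = g + ε`. -/
def centralVec (ε y t : ℕ) (k : ℤ) : RatFunc ℚ :=
  qfact q t * qfact q (t + y) * centralCoeff ε t k

/-- The `ℕ[q]`-cone spanned by the functions `centralVec ε y t` with `t ≤ N`. -/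
def centralCone (ε y N : ℕ) : Submodule nonnegPoly (ℤ → RatFunc ℚ) :=
  Submodule.span nonnegPoly (centralVec ε y '' Set.Iic N)

lemma link_mul_centralVec {c ε : ℕ} (hc : c ≤ 1) (hε : ε ≤ 1) (y g t : ℕ) (k : ℤ) :
    qfact q (g + y) * q ^ (c * (k ^ 2 - ε * k)) * centralCoeff ε g k * centralVec ε (g + ε) t k
      = ∑ u ∈ range (t + 1), q ^ linearizationExp c ε t g u
          * (qbinom q t u * qbinom q (g + y : ℕ) (u + y : ℕ)) * centralVec ε y u k := by
  trans qfact q t * qfact q (g + y) * (q ^ (c * (k ^ 2 - ε * k))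
    * (qfact q (t + g + ε) * (centralCoeff ε t k * centralCoeff ε g k)))
  · rw [centralVec, ← add_assoc]
    ring
  · rw [centralCoeff_mul_centralCoeff hc hε, mul_sum]
    refine sum_congr rfl fun u _ => ?_
    have hleft := qbinom_mul_qfact t u
    have hright := qbinom_mul_qfact (g + y) (u + y)
    rw [show ((g + y : ℕ) : ℤ) - (u + y : ℕ) = g - u by lia] at hright
    rw [centralVec]
    linear_combination -q ^ linearizationExp c ε t g u * centralCoeff ε u k
      * (qbinom q (g + y : ℕ) (u + y : ℕ) * qfact q (u + y) * hleft
        + qfact q t * qfactInv (t - u) * hright)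

lemma link_mul_mem_centralCone {c ε y g N : ℕ} (hc : c ≤ 1) (hε : ε ≤ 1)
    {φ : ℤ → RatFunc ℚ} (hφ : φ ∈ centralCone ε (g + ε) N) :
    (fun k : ℤ => qfact q (g + y) * q ^ (c * (k ^ 2 - ε * k)) * centralCoeff ε g k) * φ
      ∈ centralCone ε y N := by
  set link : ℤ → RatFunc ℚ :=
    fun k => qfact q (g + y) * q ^ (c * (k ^ 2 - ε * k)) * centralCoeff ε g k
  suffices hle : centralCone ε (g + ε) N
      ≤ (centralCone ε y N).comap (LinearMap.mulLeft nonnegPoly link) from hle hφ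
  refine Submodule.span_le.2 ?_
  rintro _ ⟨t, ht, rfl⟩
  have hcoeff (u : ℕ) (hu : u ∈ range (t + 1)) : q ^ linearizationExp c ε t g u
      * (qbinom q t u * qbinom q (g + y : ℕ) (u + y : ℕ)) ∈ nonnegPoly := by
    rw [mem_range] at hu
    rcases lt_or_ge g u with hgu | hug
    · rw [qbinom_eq_zero_of_lt (by lia : ((g + y : ℕ) : ℤ) < (u + y : ℕ)), mul_zero, mul_zero]
      exact zero_mem _
    · exact mul_mem (X_zpow_mem_nonnegPoly (linearizationExp_nonneg hc (by lia) hug))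
        (mul_mem (qbinom_mem_nonnegPoly _ _) (qbinom_mem_nonnegPoly _ _))
  have hexpand : link * centralVec ε (g + ε) t = ∑ u ∈ (range (t + 1)).attach,
      (⟨_, hcoeff u.1 u.2⟩ : nonnegPoly) • centralVec ε y u := by
    funext k
    rw [Finset.sum_apply, Pi.mul_apply, link_mul_centralVec hc hε, ← sum_attach]
    rfl
  change link * centralVec ε (g + ε) t ∈ centralCone ε y N
  rw [hexpand]
  refine sum_mem fun u _ => Submodule.smul_mem _ _ (Submodule.subset_span ⟨u, ?_, rfl⟩)
  rw [Set.mem_Iic] at ht ⊢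
  have hu := mem_range.1 u.2
  lia

/-- The chain `[m_0]! · ∏_{i<r} [m_i+m_{i+1}+ε]! · q^{c(k²-εk)} · ∏_{i≤r} 1/([m_i+k]![m_i+ε-k]!)`
of central coefficients as a function of `k`. -/
def centralChain (ε r c : ℕ) (m : ℕ → ℕ) (k : ℤ) : RatFunc ℚ :=
  qfact q (m 0) * (∏ i ∈ range r, qfact q (m i + m (i + 1) + ε)) * q ^ (c * (k ^ 2 - ε * k))
    * ∏ i ∈ range (r + 1), centralCoeff ε (m i) k

lemma smul_centralChain_mem_centralCone {ε r c : ℕ} (hε : ε ≤ 1) (hc : c ≤ r) (y : ℕ)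
    (m : ℕ → ℕ) : qfact q (m r + y) • centralChain ε r c m ∈ centralCone ε y (m 0) := by
  induction r generalizing c y with
  | zero =>
    obtain rfl : c = 0 := by lia
    refine Submodule.subset_span ⟨m 0, Set.self_mem_Iic, ?_⟩
    funext k
    simp only [centralVec, centralChain, Pi.smul_apply, smul_eq_mul, prod_range_zero,
      prod_range_one, Nat.cast_zero, zero_mul, zpow_zero, zero_add, mul_one]
    ring
  | succ r ih =>
    obtain ⟨d, e, hd, he, rfl⟩ : ∃ d e, d ≤ r ∧ e ≤ 1 ∧ c = d + e :=
      ⟨min c r, c - r, by lia, by lia, by lia⟩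
    convert link_mul_mem_centralCone (y := y) he hε (ih hd (m (r + 1) + ε)) using 1
    funext k
    simp only [Pi.smul_apply, Pi.mul_apply, smul_eq_mul, centralChain]
    rw [prod_range_succ _ r, prod_range_succ _ (r + 1), Nat.cast_add, add_mul,
      zpow_add₀ RatFunc.X_ne_zero, ← add_assoc (m r)]
    ring

/-- The weight `(-1)^k q^{k(k-1)/2}` of the alternating sums. -/
def altWeight (k : ℤ) : RatFunc ℚ := (-1) ^ k * q ^ (k * (k - 1) / 2)

lemma altWeight_neg (k : ℤ) : altWeight (-k) = q ^ k * altWeight k := by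
  rw [altWeight, altWeight, show -k * (-k - 1) = k * (k - 1) + k * 2 by ring,
    Int.add_mul_ediv_right _ _ two_ne_zero, zpow_add₀ RatFunc.X_ne_zero, zpow_neg, ← inv_zpow,
    inv_neg_one]
  ring

lemma altWeight_one_sub (k : ℤ) : altWeight (1 - k) = -altWeight k := by
  rw [altWeight, altWeight, show (1 - k) * (1 - k - 1) = k * (k - 1) by ring,
    zpow_sub₀ (neg_ne_zero.2 one_ne_zero), zpow_one, div_eq_mul_inv, ← inv_zpow, inv_neg_one]
  ring

lemma sum_Icc_eq_zero_of_antisymm {A : Type*} [AddCommGroup A] [IsAddTorsionFree A] {a b : ℤ}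
    {f : ℤ → A} (hf : ∀ k, f (a + b - k) = -f k) : ∑ k ∈ Icc a b, f k = 0 := by
  rw [← self_eq_neg, ← sum_neg_distrib]
  refine sum_equiv (Equiv.subLeft (a + b)) (fun k => ?_) fun k _ => ?_
  · simp only [mem_Icc, Equiv.subLeft_apply]
    lia
  · rw [Equiv.subLeft_apply, hf, neg_neg]

lemma sum_altWeight_mul_centralCoeff_one {N : ℕ} (h : ℕ) {φ : ℤ → RatFunc ℚ}
    (hφ : ∀ k, φ (-k) = φ k) :
    ∑ k ∈ Icc (-N : ℤ) N, altWeight k * (φ k * centralCoeff 1 h k)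
      = qint q (h + 1) * ∑ k ∈ Icc (-N : ℤ) N, altWeight k * (φ k * centralCoeff 0 (h + 1) k) := by
  have hodd : ∑ k ∈ Icc (-N : ℤ) N,
      altWeight k * qintZ k * (φ k * centralCoeff 0 (h + 1) k) = 0 := by
    refine sum_Icc_eq_zero_of_antisymm fun k => ?_
    rw [neg_add_cancel, zero_sub, hφ, centralCoeff_zero_neg, altWeight_neg]
    linear_combination altWeight k * (φ k * centralCoeff 0 (h + 1) k) * X_zpow_mul_qintZ_neg k
  have hsplit (k : ℤ) : altWeight k * (φ k * centralCoeff 1 h k)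
      = qint q (h + 1) * (altWeight k * (φ k * centralCoeff 0 (h + 1) k))
        + q ^ (h + 1) * (altWeight k * qintZ k * (φ k * centralCoeff 0 (h + 1) k)) := by
    rw [centralCoeff_one_eq, qintZ_add, ← Nat.cast_add_one, qintZ_natCast, zpow_natCast]
    ring
  rw [sum_congr rfl fun k _ => hsplit k, sum_add_distrib, ← mul_sum, ← mul_sum, hodd, mul_zero,
    add_zero]

lemma sum_altWeight_mul_centralCoeff_zero {t N : ℕ} (ht : t ≤ N) :
    ∑ k ∈ Icc (-N : ℤ) N, altWeight k * centralCoeff 0 t k = if t = 0 then 1 else 0 := by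
  rcases t with _ | h
  · rw [if_pos rfl, sum_eq_single 0]
    · simp [altWeight, centralCoeff, qfactInv_zero]
    · intro k _ hk
      rw [centralCoeff_eq_zero (by lia), mul_zero]
    · simp
  · rw [if_neg h.succ_ne_zero]
    have hanti : ∑ k ∈ Icc (-N : ℤ) N, altWeight k * centralCoeff 1 h k = 0 := by
      rw [← sum_subset (Icc_subset_Icc_left (by lia : (-N : ℤ) ≤ 1 - N))]
      · refine sum_Icc_eq_zero_of_antisymm fun k => ?_
        have hrefl := centralCoeff_sub 1 h k
        rw [Nat.cast_one] at hrefl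
        rw [sub_add_cancel, altWeight_one_sub, hrefl, neg_mul]
      · intro k hk hk'
        rw [mem_Icc] at hk hk'
        rw [centralCoeff_eq_zero (by lia), mul_zero]
    have hreduce := sum_altWeight_mul_centralCoeff_one (N := N) h (φ := 1) fun _ => rfl
    simp only [Pi.one_apply, one_mul, hanti] at hreduce
    exact (mul_eq_zero.1 hreduce.symm).resolve_left (qint_ne_zero h.succ_ne_zero)

lemma sum_mul_mem_of_mem_span {ι R : Type*} [CommSemiring R] {S : Subsemiring R}
    {s : Set (ι → R)} (I : Finset ι) (w : ι → R) (hs : ∀ φ ∈ s, ∑ k ∈ I, w k * φ k ∈ S)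
    {φ : ι → R} (hφ : φ ∈ Submodule.span S s) : ∑ k ∈ I, w k * φ k ∈ S := by
  induction hφ using Submodule.span_induction with
  | mem φ hφ => exact hs φ hφ
  | zero => simp [zero_mem]
  | add φ ψ _ _ hφ hψ =>
    simp only [Pi.add_apply, mul_add, sum_add_distrib]
    exact add_mem hφ hψ
  | smul p φ _ hφ =>
    simp only [Pi.smul_apply, Subsemiring.smul_def, smul_eq_mul, mul_left_comm _ (p : R),
      ← mul_sum]
    exact mul_mem p.2 hφ

lemma sum_altWeight_mul_mem {N : ℕ} {φ : ℤ → RatFunc ℚ} (hφ : φ ∈ centralCone 0 0 N) :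
    ∑ k ∈ Icc (-N : ℤ) N, altWeight k * φ k ∈ nonnegPoly := by
  refine sum_mul_mem_of_mem_span _ _ ?_ hφ
  rintro _ ⟨t, ht, rfl⟩
  simp only [centralVec, mul_left_comm (altWeight _), ← mul_sum,
    sum_altWeight_mul_centralCoeff_zero ht, add_zero]
  split_ifs with h
  · simp [h, qfact_zero, one_mem]
  · simp [zero_mem]

lemma sum_altWeight_mul_centralCoeff_one_mul_mem {c u N : ℕ} (hc : c ≤ 1) {φ : ℤ → RatFunc ℚ}
    (hφ : φ ∈ centralCone 0 (u + 1) N) :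
    ∑ k ∈ Icc (-N : ℤ) N,
      altWeight k * (qfact q u * q ^ (c * k ^ 2) * centralCoeff 1 u k) * φ k ∈ nonnegPoly := by
  refine sum_mul_mem_of_mem_span _ _ ?_ hφ
  rintro _ ⟨t, ht, rfl⟩
  have hvec : centralVec 0 (u + 1) t ∈ centralCone 0 (u + 1 + 0) N :=
    Submodule.subset_span ⟨t, ht, rfl⟩
  convert sum_altWeight_mul_mem (link_mul_mem_centralCone (y := 0) hc zero_le_one hvec) using 1
  have hreduce := sum_altWeight_mul_centralCoeff_one (N := N) u
    (φ := fun k => qfact q u * q ^ (c * k ^ 2) * centralVec 0 (u + 1) t k) fun k => by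
      simp only [neg_sq, centralVec, centralCoeff_zero_neg]
  rw [mul_sum] at hreduce
  convert hreduce using 2 with k _ k _
  · ring
  · simp only [Pi.mul_apply, add_zero, qfact_succ, Nat.cast_zero, zero_mul, sub_zero]
    ring

lemma sum_altWeight_mul_mul_mem {c l N M : ℕ} (hc : c ≤ 1) {φ ψ : ℤ → RatFunc ℚ}
    (hφ : ∀ y, qfact q (l + y) • φ ∈ centralCone 0 y N) (hψ : ψ ∈ centralCone 1 (l + 1) M) :
    ∑ k ∈ Icc (-N : ℤ) N, altWeight k * q ^ (c * k ^ 2) * φ k * ψ k ∈ nonnegPoly := by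
  refine sum_mul_mem_of_mem_span _ _ ?_ hψ
  rintro _ ⟨u, _, rfl⟩
  convert sum_altWeight_mul_centralCoeff_one_mul_mem hc (hφ (u + 1)) using 2 with k
  rw [centralVec, Pi.smul_apply, smul_eq_mul, add_left_comm]
  ring

lemma prod_range_succ_cyclic {M : Type*} [CommMonoid M] (f : ℕ → ℕ → M) (r : ℕ) :
    ∏ i ∈ range (r + 1), f i ((i + 1) % (r + 1))
      = (∏ i ∈ range r, f i (i + 1)) * f r 0 := by
  rw [prod_range_succ, Nat.mod_self]
  congr 1
  refine prod_congr rfl fun i hi => ?_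
  rw [Nat.mod_eq_of_lt (Nat.succ_lt_succ (mem_range.1 hi))]

lemma prod_qbinom_cyclic (ε r : ℕ) (m : ℕ → ℕ) (k : ℤ) :
    ∏ i ∈ range (r + 1), qbinom q (m i + m ((i + 1) % (r + 1)) + ε) (m i + k)
      = (∏ i ∈ range r, qfact q (m i + m (i + 1) + ε)) * qfact q (m 0 + m r + ε)
        * ∏ i ∈ range (r + 1), centralCoeff ε (m i) k := by
  have hqbinom (x y : ℕ) : qbinom q (x + y + ε) (x + k)
      = qfact q (x + y + ε) * (qfactInv (x + k) * qfactInv (y + ε - k)) := by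
    have h := qbinom_eq (x + y + ε) (x + k)
    push_cast at h
    rw [h, mul_assoc, show (x : ℤ) + y + ε - (x + k) = y + ε - k by ring]
  have hshift : ∏ i ∈ range (r + 1), qfactInv (m ((i + 1) % (r + 1)) + ε - k)
      = ∏ i ∈ range (r + 1), qfactInv (m i + ε - k) := by
    rw [prod_range_succ_cyclic (fun _ j => qfactInv (m j + ε - k)),
      prod_range_succ' (fun i => qfactInv (m i + ε - k))]
  simp only [hqbinom, centralCoeff, prod_mul_distrib, hshift,
    prod_range_succ_cyclic (fun i j => qfact q (m i + m j + ε)), add_comm (m r)]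

lemma F_eq_sum (r s b c d : ℕ) (m n : ℕ → ℕ) :
    F (r + 1) (s + 1) (c + d) (b + 1) m n q = ∑ k ∈ Icc (-n 0 : ℤ) (n 0),
      altWeight k * q ^ (c * k ^ 2) * centralChain 0 s d n k
        * (qfact q (m r + (n s + 1)) • centralChain 1 r b m) k := by
  rw [F, mul_sum]
  refine sum_congr rfl fun k _ => ?_
  have hm := prod_qbinom_cyclic 1 r m k
  have hn := prod_qbinom_cyclic 0 s n k
  simp only [Nat.cast_one, Nat.cast_zero, add_zero] at hm hn
  have hexp : ((c + d : ℕ) : ℤ) * k ^ 2 + (2 * (b + 1 : ℕ) - 1) * (k * (k - 1) / 2)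
      = c * k ^ 2 + k * (k - 1) / 2 + d * k ^ 2 + b * (k ^ 2 - k) := by
    have htwo : 2 * (k * (k - 1) / 2) = k * (k - 1) :=
      Int.mul_ediv_cancel' (Int.even_mul_pred_self k).two_dvd
    push_cast
    linear_combination (b : ℤ) * htwo
  rw [hm, hn, hexp, zpow_add₀ RatFunc.X_ne_zero, zpow_add₀ RatFunc.X_ne_zero,
    zpow_add₀ RatFunc.X_ne_zero]
  simp only [altWeight, centralChain, Pi.smul_apply, smul_eq_mul, Nat.cast_zero, Nat.cast_one,
    zero_mul, one_mul, sub_zero, add_zero, add_tsub_cancel_right, ← add_assoc]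
  rw [div_mul_eq_mul_div,
    div_eq_iff (mul_ne_zero (qfact_ne_zero (m 0 + m r + 1)) (qfact_ne_zero (n 0 + n s)))]
  ring

theorem F_isNonnegPoly_general (r s : ℕ) (hs : 0 < s) (m n : ℕ → ℕ)
    (a b : ℕ) (ha : a ≤ s) (hb1 : 1 ≤ b) (hbr : b ≤ r) :
    IsNonnegPoly (F r s a b m n RatFunc.X) := by
  obtain ⟨r, rfl⟩ : ∃ r', r = r' + 1 := ⟨r - 1, by lia⟩
  obtain ⟨s, rfl⟩ : ∃ s', s = s' + 1 := ⟨s - 1, by lia⟩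
  obtain ⟨b, rfl⟩ : ∃ b', b = b' + 1 := ⟨b - 1, by lia⟩
  obtain ⟨c, d, hc, hd, rfl⟩ : ∃ c d, c ≤ 1 ∧ d ≤ s ∧ a = c + d :=
    ⟨a - s, min a s, by lia, by lia, by lia⟩
  rw [isNonnegPoly_iff_mem, F_eq_sum]
  exact sum_altWeight_mul_mul_mem hc
    (fun y => smul_centralChain_mem_centralCone zero_le_one hd y n)
    (smul_centralChain_mem_centralCone le_rfl (by lia) (n s + 1) m)

/-- Theorem 2: for `r, s > 1`, positive integers `m_1, …, m_r` and
`n_1, …, n_s` (with cyclic conventions), `0 ≤ a ≤ s` and `1 ≤ b ≤ r`,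
the alternating sum `F_{r,s}^{(b)}(m; n; a; q)` is a polynomial in `q`
with nonnegative integer coefficients. -/
theorem F_isNonnegPoly (r s : ℕ) (hr : 1 < r) (hs : 1 < s) (m n : ℕ → ℕ)
    (hm : ∀ i < r, 0 < m i) (hn : ∀ j < s, 0 < n j)
    (a b : ℕ) (ha : a ≤ s) (hb1 : 1 ≤ b) (hbr : b ≤ r) :
    IsNonnegPoly (F r s a b m n RatFunc.X) :=
  F_isNonnegPoly_general r s (by lia) m n a b ha hb1 hbr

end
end

section
/- Let r, s > 1, let m_1, ..., m_r be nonnegative integers and n_1, ..., n_s positive integers with cyclic conventions m_{r+1} = m_1 and n_{s+1} = n_1, and let 0 ≤ a ≤ s and 1 ≤ b ≤ r. If F_{r,s}^{(r-b+1)}(m; n; s-a; q) is a polynomial in q, then its degree is at most Δ(m;n) = C(m_1,2) + C(n_1,2) + C(m_r+n_s+1,2) - C(m_1+m_r+1,2) - C(n_1+n_s,2) + Σ_{i=1}^{r} m_i(m_{i+1}+1) + Σ_{j=1}^{s} n_j n_{j+1}, where C(N,2) = N(N-1)/2. -/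
open Finset

noncomputable section

/-- The exponent `Δ(m;n)` from the reciprocity lemma:
`Δ = C(m_1,2) + C(n_1,2) + C(m_r+n_s+1,2) - C(m_1+m_r+1,2) - C(n_1+n_s,2)
   + Σ_{i=1}^{r} m_i(m_{i+1}+1) + Σ_{j=1}^{s} n_j n_{j+1}`. -/
def delta (r s : ℕ) (m n : ℕ → ℕ) : ℤ :=
  ((m 0).choose 2 : ℤ) + ((n 0).choose 2 : ℤ) +
      ((m (r - 1) + n (s - 1) + 1).choose 2 : ℤ) -
    ((m 0 + m (r - 1) + 1).choose 2 : ℤ) - ((n 0 + n (s - 1)).choose 2 : ℤ) +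
    ∑ i ∈ Finset.range r, (m i : ℤ) * ((m ((i + 1) % r) : ℤ) + 1) +
    ∑ j ∈ Finset.range s, (n j : ℤ) * (n ((j + 1) % s) : ℤ)

/-!
At infinity `[n + 1]` has degree `n`, so `[n]!` has degree `C(n, 2)` and `[N choose K]` has degree
`K (N - K)`. Summed around the cycles, the degrees of the Gaussian coefficients at index `k` fall
short of those at `k = 0` by `r k (k - 1)` and `s k ^ 2`. The power of `q` in the `k`-th summand
makes up for at most this deficit, so no summand exceeds the degree at `k = 0`. The argument works
for every valuation that is larger than `1` at `q`, with the degree read off as an exponent of the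
value of `q`.
-/

theorem choose_two_add (k l : ℕ) :
    (k + l).choose 2 = k.choose 2 + l.choose 2 + k * l := by
  qify
  simp only [Nat.cast_choose_two]
  push_cast
  ring

theorem prod_zpow_eq_zpow_sum₀ {ι G : Type*} [CommGroupWithZero G] {g : G} (hg : g ≠ 0)
    (t : Finset ι) (d : ι → ℤ) : ∏ i ∈ t, g ^ d i = g ^ ∑ i ∈ t, d i := by
  induction t using Finset.cons_induction with
  | empty => simp
  | cons i t hi ih => rw [prod_cons, sum_cons, zpow_add₀ hg, ih]

theorem sum_range_succ_mod {M : Type*} [AddCommMonoid M] (f : ℕ → M) (r : ℕ) :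
    ∑ i ∈ range r, f ((i + 1) % r) = ∑ i ∈ range r, f i := by
  cases r with
  | zero => simp
  | succ t =>
    rw [sum_range_succ, sum_range_succ' f, Nat.mod_self]
    congr 1
    exact sum_congr rfl fun i hi ↦ by rw [Nat.mod_eq_of_lt (by simpa using hi)]

theorem sum_range_cyclic_mul_shift {R : Type*} [CommRing R] (u : ℕ → R) (r : ℕ) (c k : R) :
    ∑ i ∈ range r, (u i + k) * (u ((i + 1) % r) + c - k) =
      ∑ i ∈ range r, u i * (u ((i + 1) % r) + c) + r * (k * (c - k)) := by
  have expand (i : ℕ) : (u i + k) * (u ((i + 1) % r) + c - k) =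
      u i * (u ((i + 1) % r) + c) + (k * u ((i + 1) % r) - k * u i) + k * (c - k) := by ring
  simp only [expand, sum_add_distrib, sum_sub_distrib, ← mul_sum, sum_range_succ_mod u,
    sub_self, add_zero, sum_const, card_range, nsmul_eq_mul]
  ring

theorem quadratic_exponent_le {a b r s : ℤ} (ha : a ≤ s) (hb : b ≤ r) (k : ℤ) :
    a * k ^ 2 + (2 * b - 1) * (k * (k - 1) / 2) ≤ s * k ^ 2 + r * (k * (k - 1)) := by
  obtain ⟨t, ht⟩ : ∃ t, k * (k - 1) = 2 * t := (Int.even_mul_pred_self k).two_dvd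
  have t_nonneg : 0 ≤ t := by
    rcases le_or_gt k 0 with hk | hk <;> nlinarith
  rw [ht, Int.mul_ediv_cancel_left _ two_ne_zero]
  calc a * k ^ 2 + (2 * b - 1) * t
      ≤ s * k ^ 2 + (2 * r) * t := by gcongr; linarith
    _ = s * k ^ 2 + r * (2 * t) := by ring

section

variable {Γ₀ : Type*} [LinearOrderedCommGroupWithZero Γ₀]

theorem valuation_one_sub_pow {R : Type*} [Ring R] (v : Valuation R Γ₀) {x : R} (hx : 1 < v x)
    {n : ℕ} (hn : n ≠ 0) : v (1 - x ^ n) = v x ^ n := by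
  rw [Valuation.map_sub_eq_of_lt_right, map_pow]
  rw [map_one, map_pow]
  exact one_lt_pow₀ hx hn

variable (v : Valuation (RatFunc ℚ) Γ₀) {x : RatFunc ℚ} (hx : 1 < v x)
include hx

theorem valuation_qint_succ (n : ℕ) : v (qint x (n + 1)) = v x ^ n := by
  have hx0 : v x ≠ 0 := (zero_lt_one.trans hx).ne'
  have denominator : v (1 - x) = v x := by
    simpa only [pow_one] using valuation_one_sub_pow v hx one_ne_zero
  rw [qint, map_div₀, valuation_one_sub_pow v hx n.succ_ne_zero, denominator, pow_succ,
    mul_div_cancel_right₀ _ hx0]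

theorem valuation_qfact (n : ℕ) : v (qfact x n) = v x ^ n.choose 2 := by
  rw [qfact, map_prod]
  simp only [valuation_qint_succ v hx]
  rw [prod_pow_eq_pow_sum, sum_range_id, Nat.choose_two_right]

theorem valuation_qbinom_le (N K : ℤ) : v (qbinom x N K) ≤ v x ^ (K * (N - K)) := by
  have hx0 : v x ≠ 0 := (zero_lt_one.trans hx).ne'
  rw [qbinom]
  split_ifs with h
  · obtain ⟨k, rfl⟩ := Int.eq_ofNat_of_zero_le h.1
    obtain ⟨l, hl⟩ := Int.eq_ofNat_of_zero_le (sub_nonneg.2 h.2)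
    obtain rfl : N = ((k + l : ℕ) : ℤ) := by push_cast; linarith
    rw [hl]
    simp only [Int.toNat_natCast, map_div₀, map_mul, valuation_qfact v hx, choose_two_add, pow_add]
    rw [mul_div_cancel_left₀ _ (mul_ne_zero (pow_ne_zero _ hx0) (pow_ne_zero _ hx0)),
      ← Nat.cast_mul, zpow_natCast]
  · simp

theorem valuation_prod_qbinom_le (u : ℕ → ℕ) (r : ℕ) (c k : ℤ) :
    v (∏ i ∈ range r, qbinom x ((u i : ℤ) + u ((i + 1) % r) + c) (u i + k)) ≤
      v x ^ (∑ i ∈ range r, (u i : ℤ) * (u ((i + 1) % r) + c) + r * (k * (c - k))) := by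
  rw [map_prod, ← sum_range_cyclic_mul_shift (fun i ↦ (u i : ℤ)),
    ← prod_zpow_eq_zpow_sum₀ (zero_lt_one.trans hx).ne']
  refine prod_le_prod' fun i _ ↦ (valuation_qbinom_le v hx _ _).trans_eq ?_
  congr 1
  ring

theorem valuation_summand_le {r s a b : ℕ} (ha : a ≤ s) (hb : b ≤ r) (m n : ℕ → ℕ) (k : ℤ) :
    v ((-1) ^ k * x ^ ((a : ℤ) * k ^ 2 + (2 * (b : ℤ) - 1) * (k * (k - 1) / 2)) *
        (∏ i ∈ range r, qbinom x ((m i : ℤ) + m ((i + 1) % r) + 1) (m i + k)) *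
        ∏ j ∈ range s, qbinom x ((n j : ℤ) + n ((j + 1) % s)) (n j + k)) ≤
      v x ^ (∑ i ∈ range r, (m i : ℤ) * (m ((i + 1) % r) + 1) +
        ∑ j ∈ range s, (n j : ℤ) * n ((j + 1) % s)) := by
  have hx0 : v x ≠ 0 := (zero_lt_one.trans hx).ne'
  have m_product := valuation_prod_qbinom_le v hx m r 1 k
  have n_product := valuation_prod_qbinom_le v hx n s 0 k
  have exponent := quadratic_exponent_le (Int.ofNat_le.2 ha) (Int.ofNat_le.2 hb) k
  simp only [add_zero] at n_product
  simp only [map_mul, map_zpow₀, Valuation.map_neg, map_one, one_zpow, one_mul]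
  refine (mul_le_mul' (mul_le_mul' le_rfl m_product) n_product).trans ?_
  rw [← zpow_add₀ hx0, ← zpow_add₀ hx0]
  refine zpow_le_zpow_right₀ hx.le ?_
  linarith

theorem valuation_F_le {r s a b : ℕ} (ha : a ≤ s) (hb : b ≤ r) (m n : ℕ → ℕ) :
    v (F r s a b m n x) ≤ v x ^ delta r s m n := by
  have hx0 : v x ≠ 0 := (zero_lt_one.trans hx).ne'
  rw [F, map_mul]
  refine (mul_le_mul' le_rfl
    (v.map_sum_le fun k _ ↦ valuation_summand_le v hx ha hb m n k)).trans_eq ?_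
  simp only [map_div₀, map_mul, valuation_qfact v hx, ← zpow_natCast, ← zpow_add₀ hx0,
    ← zpow_sub₀ hx0, delta]
  congr 1
  ring

end

theorem F_degree_le_general {r s a b : ℕ} (ha : a ≤ s) (hb : b ≤ r) (m n : ℕ → ℕ)
    (hF : F r s a b m n RatFunc.X ≠ 0) :
    (F r s a b m n RatFunc.X).intDegree ≤ delta r s m n := by
  classical
  have one_lt_X : 1 < RatFunc.inftyValuation ℚ RatFunc.X := by
    rw [RatFunc.inftyValuation.X, ← WithZero.exp_zero, WithZero.exp_lt_exp]
    exact one_pos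
  have h := valuation_F_le (RatFunc.inftyValuation ℚ) one_lt_X ha hb m n
  rwa [← map_zpow₀, RatFunc.inftyValuation.X_zpow, RatFunc.inftyValuation_apply,
    RatFunc.inftyValuation_of_nonzero ℚ hF, WithZero.exp_le_exp] at h

/-- Degree bound: for `r, s > 1`, nonnegative `m_i`, positive `n_j`,
`0 ≤ a ≤ s` and `1 ≤ b ≤ r`, if `F_{r,s}^{(r-b+1)}(m; n; s-a; q)` is a
polynomial in `q`, then its degree is at most `Δ(m;n)`. -/
theorem F_degree_le (r s : ℕ) (hr : 1 < r) (hs : 1 < s) (m n : ℕ → ℕ)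
    (hn : ∀ j < s, 0 < n j) (a b : ℕ) (ha : a ≤ s) (hb1 : 1 ≤ b) (hbr : b ≤ r)
    (p : Polynomial ℚ)
    (hp : F r s (s - a) (r - b + 1) m n RatFunc.X =
      algebraMap (Polynomial ℚ) (RatFunc ℚ) p) (hp0 : p ≠ 0) :
    (p.natDegree : ℤ) ≤ delta r s m n := by
  have hF : F r s (s - a) (r - b + 1) m n RatFunc.X ≠ 0 := by simpa [hp] using hp0
  simpa [hp] using F_degree_le_general (Nat.sub_le s a) (by lia : r - b + 1 ≤ r) m n hF

end
end
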